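/- There exist points v₁, …, v₅ ∈ ℝ² in strictly convex position (listed in counterclockwise order) such that every interior angle of the convex pentagon P = conv{v₁, …, v₅} is strictly greater than π/2, and there exists an external watchman route for {P} whose length is at most 0.93 times the perimeter ∑_{i=1}^{5} ‖v_{i+1} − v_i‖ (indices mod 5) of P. -/

import Mathlib

/-!
The pentagon is a flat house: base `(-39,0)`, `(39,0)`, short walls of length `5` up to
`(±42,4)`, and a roof with apex `(0,44)` whose angle is slightly obtuse; its perimeter is
`78 + 2 * 5 + 2 * 58 = 204`.

A point sees a whole edge as soon as it lies in the closed half-plane beyond that edge. The point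
`(47,0)` lies beyond (or on the line of) the base, the right wall and the right roof edge, and
`(-47,0)` does the same on the left. So walking along the base line from `(-47,0)` to `(47,0)` and
back is an external watchman route, of length `188 ≤ 0.93 * 204 = 189.72`.

To make this precise, each edge gets an affine functional that is nonpositive on the pentagon
(`edgeFun_nonpos`), hence negative on its interior (`neg_of_mem_interior`). Conversely a point where
all five functionals are negative is interior (`mem_interior_of_neg`), so a boundary point makes
some functional nonnegative, and an endpoint of the walk that also makes it nonnegative sees it.
-/

open Set Metric ENNReal

noncomputable section

abbrev E2 := EuclideanSpace ℝ (Fin 2)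

/-- The planar cross product (signed area form). -/
def cross (a b : E2) : ℝ := a 0 * b 1 - a 1 * b 0

/-- The vertices of the pentagon, in counterclockwise order. -/
def pent : Fin 5 → E2 := ![!₂[-39, 0], !₂[39, 0], !₂[42, 4], !₂[0, 44], !₂[-42, 4]]

lemma pent_zero : pent 0 = !₂[-39, 0] := rfl
lemma pent_one : pent 1 = !₂[39, 0] := rfl
lemma pent_two : pent 2 = !₂[42, 4] := rfl
lemma pent_three : pent 3 = !₂[0, 44] := rfl
lemma pent_four : pent 4 = !₂[-42, 4] := rfl

/-- The affine functional `a x + b y + c` on the plane. -/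
def aff (a b c : ℝ) (p : E2) : ℝ := a * p 0 + b * p 1 + c

/-- The outward affine functional vanishing on the line through `pent i` and `pent (i + 1)`. -/
def edgeFun : Fin 5 → E2 → ℝ :=
  ![aff 0 (-1) 0, aff 4 (-3) (-156), aff 20 21 (-924), aff (-20) 21 (-924), aff (-4) (-3) (-156)]

/-- The tour: `(-47,0)` at times `0` and `1`, `(47,0)` at time `1/2`, moving at constant speed on
the base line in between. -/
def walk (t : ℝ) : E2 := !₂[47 - 94 * |2 * t - 1|, 0]

lemma convex_aff_nonpos (a b c : ℝ) : Convex ℝ {p : E2 | aff a b c p ≤ 0} := by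
  intro p hp q hq s t hs ht hst
  simp only [aff, mem_ofPred_eq, PiLp.add_apply, PiLp.smul_apply, smul_eq_mul] at *
  have : c = s * c + t * c := by rw [← add_mul, hst, one_mul]
  rw [this]
  nlinarith [mul_nonneg hs (neg_nonneg.2 hp), mul_nonneg ht (neg_nonneg.2 hq)]

lemma convex_aff_nonneg (a b c : ℝ) : Convex ℝ {p : E2 | 0 ≤ aff a b c p} := by
  have h := convex_aff_nonpos (-a) (-b) (-c)
  have e : {p : E2 | 0 ≤ aff a b c p} = {p : E2 | aff (-a) (-b) (-c) p ≤ 0} := by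
    ext p
    simp only [aff, mem_ofPred_eq]
    constructor <;> intro h <;> linarith
  rwa [e]

/-- A nonconstant affine functional that is nonpositive on a set is negative on its interior:
move slightly in the direction of its gradient. -/
lemma neg_of_mem_interior {a b c : ℝ} (hab : 0 < a ^ 2 + b ^ 2) {s : Set E2}
    (hs : ∀ p ∈ s, aff a b c p ≤ 0) {q : E2} (hq : q ∈ interior s) : aff a b c q < 0 := by
  have hcont : Continuous fun ε : ℝ => q + ε • (!₂[a, b] : E2) := by fun_prop
  have hnhds : ∀ᶠ ε in nhds (0 : ℝ), q + ε • (!₂[a, b] : E2) ∈ s :=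
    hcont.tendsto 0 (by simpa using mem_interior_iff_mem_nhds.1 hq)
  obtain ⟨ε, hε, h⟩ := Metric.eventually_nhds_iff.1 hnhds
  have h1 := hs _ (h (y := ε / 2) (by rw [Real.dist_eq, sub_zero, abs_of_pos] <;> linarith))
  simp only [aff, PiLp.add_apply, PiLp.smul_apply, smul_eq_mul, Matrix.cons_val_zero,
    Matrix.cons_val_one] at h1
  unfold aff
  nlinarith [mul_pos hε hab]

lemma edgeFun_nonpos (i : Fin 5) : ∀ p ∈ convexHull ℝ (range pent), edgeFun i p ≤ 0 := by
  have key : ∀ a b c : ℝ, (∀ j, aff a b c (pent j) ≤ 0) →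
      ∀ p ∈ convexHull ℝ (range pent), aff a b c p ≤ 0 := by
    intro a b c h p hp
    exact convexHull_min (by rintro _ ⟨j, rfl⟩; exact h j) (convex_aff_nonpos a b c) hp
  fin_cases i <;> refine key _ _ _ (fun j => ?_) <;> fin_cases j <;> norm_num [aff, pent]

lemma edgeFun_neg_of_mem_interior (i : Fin 5) {q : E2}
    (hq : q ∈ interior (convexHull ℝ (range pent))) : edgeFun i q < 0 := by
  have h := edgeFun_nonpos i
  fin_cases i <;> exact neg_of_mem_interior (by norm_num) h hq

/-- If `q` and `p` both lie in the closed half-plane beyond edge `i`, they see each other. -/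
lemma visible_of_nonneg (i : Fin 5) {p q : E2} (hp : 0 ≤ edgeFun i p) (hq : 0 ≤ edgeFun i q) :
    Disjoint (segment ℝ p q) (interior (convexHull ℝ (range pent))) := by
  have hconv : Convex ℝ {p : E2 | 0 ≤ edgeFun i p} := by
    fin_cases i <;> exact convex_aff_nonneg _ _ _
  rw [Set.disjoint_left]
  intro z hz hz'
  exact (edgeFun_neg_of_mem_interior i hz').not_ge (hconv.segment_subset hp hq hz)

lemma mem_hull_of_comb {q : E2} (i j k : Fin 5) (a b c : ℝ) (ha : 0 ≤ a) (hb : 0 ≤ b) (hc : 0 ≤ c)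
    (habc : a + b + c = 1) (h0 : q 0 = a * pent i 0 + b * pent j 0 + c * pent k 0)
    (h1 : q 1 = a * pent i 1 + b * pent j 1 + c * pent k 1) :
    q ∈ convexHull ℝ (range pent) := by
  have e : q = a • pent i + b • pent j + c • pent k := by
    ext l
    fin_cases l
    · simpa using h0
    · simpa using h1
  have hm : ∀ l, pent l ∈ convexHull ℝ (range pent) := fun l => subset_convexHull ℝ _ ⟨l, rfl⟩
  have h := (convex_convexHull ℝ (range pent)).sum_mem (t := Finset.univ) (w := ![a, b, c])
    (z := ![pent i, pent j, pent k])
    (by intro l _; fin_cases l <;> assumption)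
    (by simpa [Fin.sum_univ_three] using habc)
    (by intro l _; fin_cases l <;> exact hm _)
  rw [e]
  simpa [Fin.sum_univ_three] using h

lemma mem_hull_of_nonpos {q : E2} (h : ∀ i, edgeFun i q ≤ 0) :
    q ∈ convexHull ℝ (range pent) := by
  have g0 := h 0
  have g1 := h 1
  have g2 := h 2
  have g3 := h 3
  have g4 := h 4
  simp only [edgeFun, aff, Matrix.cons_val] at g0 g1 g2 g3 g4
  -- Fan triangulation from `pent 0`; the weights are the barycentric coordinates.
  by_cases c2 : 0 ≤ 4 * (q 0 + 39) - 81 * q 1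
  · refine mem_hull_of_comb 0 1 2 (1 - (4 * (q 0 + 39) - 81 * q 1) / 312 - q 1 / 4)
      ((4 * (q 0 + 39) - 81 * q 1) / 312) (q 1 / 4) ?_ ?_ ?_ ?_ ?_ ?_ <;>
      (try simp [pent]) <;> linarith
  by_cases c3 : 0 ≤ 44 * (q 0 + 39) - 39 * q 1
  · refine mem_hull_of_comb 0 2 3
      (1 - (44 * (q 0 + 39) - 39 * q 1) / 3408 - (81 * q 1 - 4 * (q 0 + 39)) / 3408)
      ((44 * (q 0 + 39) - 39 * q 1) / 3408) ((81 * q 1 - 4 * (q 0 + 39)) / 3408)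
      ?_ ?_ ?_ ?_ ?_ ?_ <;>
      (try simp [pent]) <;> linarith
  · refine mem_hull_of_comb 0 3 4
      (1 - (4 * (q 0 + 39) + 3 * q 1) / 288 - (39 * q 1 - 44 * (q 0 + 39)) / 288)
      ((4 * (q 0 + 39) + 3 * q 1) / 288) ((39 * q 1 - 44 * (q 0 + 39)) / 288)
      ?_ ?_ ?_ ?_ ?_ ?_ <;>
      (try simp [pent]) <;> linarith

lemma mem_interior_of_neg {q : E2} (h : ∀ i, edgeFun i q < 0) :
    q ∈ interior (convexHull ℝ (range pent)) := by
  refine mem_interior.2 ⟨{p | ∀ i, edgeFun i p < 0}, fun p hp => mem_hull_of_nonpos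
    fun i => (hp i).le, ?_, h⟩
  rw [ofPred_forall]
  refine isOpen_iInter_of_finite fun i => isOpen_lt ?_ continuous_const
  have key : ∀ a b c, Continuous (aff a b c) := by
    intro a b c
    unfold aff
    fun_prop
  fin_cases i <;> exact key _ _ _

/-- A point at which some affine functional is positive is not in the convex hull of points where
it is nonpositive. -/
lemma notMem_hull_of_aff (a b c : ℝ) (i : Fin 5) (hi : 0 < aff a b c (pent i))
    (h : ∀ j, j ≠ i → aff a b c (pent j) ≤ 0) : pent i ∉ convexHull ℝ (pent '' {j | j ≠ i}) := by
  intro hm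
  have : aff a b c (pent i) ≤ 0 :=
    convexHull_min (by rintro _ ⟨j, hj, rfl⟩; exact h j hj) (convex_aff_nonpos a b c) hm
  exact this.not_gt hi

lemma pent_convexPosition (i : Fin 5) : pent i ∉ convexHull ℝ (pent '' {j | j ≠ i}) := by
  fin_cases i
  · refine notMem_hull_of_aff (-1) (-1) (-38) _ ?_ fun j hj => ?_
    · norm_num [aff, pent]
    · fin_cases j <;> first | exact absurd rfl hj | norm_num [aff, pent]
  · refine notMem_hull_of_aff 1 (-1) (-38) _ ?_ fun j hj => ?_
    · norm_num [aff, pent]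
    · fin_cases j <;> first | exact absurd rfl hj | norm_num [aff, pent]
  · refine notMem_hull_of_aff 1 0 (-39) _ ?_ fun j hj => ?_
    · norm_num [aff, pent]
    · fin_cases j <;> first | exact absurd rfl hj | norm_num [aff, pent]
  · refine notMem_hull_of_aff 0 1 (-4) _ ?_ fun j hj => ?_
    · norm_num [aff, pent]
    · fin_cases j <;> first | exact absurd rfl hj | norm_num [aff, pent]
  · refine notMem_hull_of_aff (-1) 0 (-39) _ ?_ fun j hj => ?_
    · norm_num [aff, pent]
    · fin_cases j <;> first | exact absurd rfl hj | norm_num [aff, pent]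

lemma pi_div_two_lt_angle {p q r : E2}
    (h : (p 0 - q 0) * (r 0 - q 0) + (p 1 - q 1) * (r 1 - q 1) < 0) :
    Real.pi / 2 < EuclideanGeometry.angle p q r := by
  by_contra! hle
  have hcos : 0 ≤ Real.cos (EuclideanGeometry.angle p q r) :=
    Real.cos_nonneg_of_neg_pi_div_two_le_of_le
      (by linarith [EuclideanGeometry.angle_nonneg p q r, Real.pi_pos]) hle
  have hin := InnerProductGeometry.cos_angle_mul_norm_mul_norm (p - q) (r - q)
  have hnn : 0 ≤ inner ℝ (p - q) (r - q) := by
    rw [← hin]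
    exact mul_nonneg hcos (by positivity)
  simp [PiLp.inner_apply, Fin.sum_univ_two] at hnn
  nlinarith

lemma norm_eq_of_sq {p : E2} {r : ℝ} (hr : 0 ≤ r) (h : p 0 ^ 2 + p 1 ^ 2 = r ^ 2) : ‖p‖ = r := by
  rw [EuclideanSpace.norm_eq, Fin.sum_univ_two, Real.norm_eq_abs, Real.norm_eq_abs, sq_abs, sq_abs,
    h, Real.sqrt_sq hr]

lemma pent_perimeter : ∑ i : Fin 5, ‖pent (i + 1) - pent i‖ = 204 := by
  rw [Fin.sum_univ_five]
  have h0 : ‖pent (0 + 1) - pent 0‖ = 78 := by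
    change ‖pent 1 - pent 0‖ = 78
    exact norm_eq_of_sq (by norm_num)
      (by norm_num [pent_zero, pent_one, pent_two, pent_three, pent_four])
  have h1 : ‖pent (1 + 1) - pent 1‖ = 5 := by
    change ‖pent 2 - pent 1‖ = 5
    exact norm_eq_of_sq (by norm_num)
      (by norm_num [pent_zero, pent_one, pent_two, pent_three, pent_four])
  have h2 : ‖pent (2 + 1) - pent 2‖ = 58 := by
    change ‖pent 3 - pent 2‖ = 58
    exact norm_eq_of_sq (by norm_num)
      (by norm_num [pent_zero, pent_one, pent_two, pent_three, pent_four])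
  have h3 : ‖pent (3 + 1) - pent 3‖ = 58 := by
    change ‖pent 4 - pent 3‖ = 58
    exact norm_eq_of_sq (by norm_num)
      (by norm_num [pent_zero, pent_one, pent_two, pent_three, pent_four])
  have h4 : ‖pent (4 + 1) - pent 4‖ = 5 := by
    change ‖pent 0 - pent 4‖ = 5
    exact norm_eq_of_sq (by norm_num)
      (by norm_num [pent_zero, pent_one, pent_two, pent_three, pent_four])
  rw [h0, h1, h2, h3, h4]
  norm_num

lemma walk_lipschitz : LipschitzWith 188 walk := by
  refine LipschitzWith.of_dist_le_mul fun s t => ?_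
  have e : dist (walk s) (walk t) = |(47 - 94 * |2 * s - 1|) - (47 - 94 * |2 * t - 1|)| := by
    rw [dist_eq_norm]
    refine norm_eq_of_sq (abs_nonneg _) ?_
    simp [walk]
  have h := abs_abs_sub_abs_le_abs_sub (2 * t - 1) (2 * s - 1)
  rw [e, Real.dist_eq, show (47 - 94 * |2 * s - 1|) - (47 - 94 * |2 * t - 1|)
    = 94 * (|2 * t - 1| - |2 * s - 1|) by ring, abs_mul]
  rw [show 2 * t - 1 - (2 * s - 1) = (-2) * (s - t) by ring, abs_mul] at h
  norm_num at h ⊢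
  linarith

lemma walk_length : eVariationOn walk (Icc 0 1) ≤ ENNReal.ofReal 188 := by
  have h := (walk_lipschitz.lipschitzOnWith (s := univ)).comp_eVariationOn_le
    (f := walk) (g := id) (s := Icc (0 : ℝ) 1) (fun _ _ => mem_univ _)
  have h2 : eVariationOn (id : ℝ → ℝ) (Icc 0 1 ∩ Icc 0 1) ≤ ENNReal.ofReal (id 1 - id 0) :=
    (MonotoneOn.eVariationOn_eq (monotone_id.monotoneOn _) (by simp) (by simp)).le
  rw [inter_self] at h2
  calc eVariationOn walk (Icc 0 1) ≤ _ := h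
    _ ≤ (188 : NNReal) * ENNReal.ofReal (id 1 - id 0) := by gcongr
    _ = ENNReal.ofReal 188 := by simp

/-- Every edge is seen in full from one of the two endpoints of the walk. -/
lemma exists_walk_nonneg (i : Fin 5) : ∃ t ∈ Icc (0 : ℝ) 1, 0 ≤ edgeFun i (walk t) := by
  have hl : (0 : ℝ) ∈ Icc (0 : ℝ) 1 := by norm_num
  have hr : (1 / 2 : ℝ) ∈ Icc (0 : ℝ) 1 := by norm_num
  fin_cases i
  · exact ⟨_, hr, by norm_num [edgeFun, aff, walk]⟩
  · exact ⟨_, hr, by norm_num [edgeFun, aff, walk]⟩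
  · exact ⟨_, hr, by norm_num [edgeFun, aff, walk]⟩
  · exact ⟨_, hl, by norm_num [edgeFun, aff, walk]⟩
  · exact ⟨_, hl, by norm_num [edgeFun, aff, walk]⟩

/-- There is a convex pentagon (vertices in strictly convex position, listed
counterclockwise) with all interior angles strictly obtuse, admitting an
external watchman route of length at most `0.93` times its perimeter. -/
theorem obtuse_pentagon_short_watchman_route :
    ∃ v : Fin 5 → E2,
      (∀ i : Fin 5, v i ∉ convexHull ℝ (v '' {j | j ≠ i})) ∧
      (∀ i : Fin 5, 0 < cross (v (i + 1) - v i) (v (i + 2) - v (i + 1))) ∧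
      (∀ i : Fin 5, Real.pi / 2 < EuclideanGeometry.angle (v (i - 1)) (v i) (v (i + 1))) ∧
      (∃ γ : ℝ → E2, ContinuousOn γ (Set.Icc 0 1) ∧ γ 0 = γ 1 ∧
        Disjoint (γ '' Set.Icc 0 1) (interior (convexHull ℝ (Set.range v))) ∧
        (∀ q ∈ frontier (convexHull ℝ (Set.range v)), ∃ t ∈ Set.Icc (0 : ℝ) 1,
          Disjoint (segment ℝ (γ t) q) (interior (convexHull ℝ (Set.range v)))) ∧
        eVariationOn γ (Set.Icc 0 1) ≤
          ENNReal.ofReal (0.93 * ∑ i : Fin 5, ‖v (i + 1) - v i‖)) := by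
  refine ⟨pent, pent_convexPosition, ?_, ?_, walk, walk_lipschitz.continuous.continuousOn, ?_, ?_,
    ?_, ?_⟩
  · intro i
    fin_cases i
    · change 0 < cross (pent 1 - pent 0) (pent 2 - pent 1)
      norm_num [cross, pent_zero, pent_one, pent_two, pent_three, pent_four]
    · change 0 < cross (pent 2 - pent 1) (pent 3 - pent 2)
      norm_num [cross, pent_zero, pent_one, pent_two, pent_three, pent_four]
    · change 0 < cross (pent 3 - pent 2) (pent 4 - pent 3)
      norm_num [cross, pent_zero, pent_one, pent_two, pent_three, pent_four]
    · change 0 < cross (pent 4 - pent 3) (pent 0 - pent 4)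
      norm_num [cross, pent_zero, pent_one, pent_two, pent_three, pent_four]
    · change 0 < cross (pent 0 - pent 4) (pent 1 - pent 0)
      norm_num [cross, pent_zero, pent_one, pent_two, pent_three, pent_four]
  · intro i
    fin_cases i
    · change Real.pi / 2 < EuclideanGeometry.angle (pent 4) (pent 0) (pent 1)
      exact pi_div_two_lt_angle (by norm_num [pent_zero, pent_one, pent_two, pent_three, pent_four])
    · change Real.pi / 2 < EuclideanGeometry.angle (pent 0) (pent 1) (pent 2)
      exact pi_div_two_lt_angle (by norm_num [pent_zero, pent_one, pent_two, pent_three, pent_four])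
    · change Real.pi / 2 < EuclideanGeometry.angle (pent 1) (pent 2) (pent 3)
      exact pi_div_two_lt_angle (by norm_num [pent_zero, pent_one, pent_two, pent_three, pent_four])
    · change Real.pi / 2 < EuclideanGeometry.angle (pent 2) (pent 3) (pent 4)
      exact pi_div_two_lt_angle (by norm_num [pent_zero, pent_one, pent_two, pent_three, pent_four])
    · change Real.pi / 2 < EuclideanGeometry.angle (pent 3) (pent 4) (pent 0)
      exact pi_div_two_lt_angle (by norm_num [pent_zero, pent_one, pent_two, pent_three, pent_four])
  · norm_num [walk]
  · rw [Set.disjoint_left]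
    rintro _ ⟨t, -, rfl⟩ hz
    have h := edgeFun_neg_of_mem_interior 0 hz
    simp [edgeFun, aff, walk] at h
  · intro q hq
    obtain ⟨i, hi⟩ : ∃ i, 0 ≤ edgeFun i q := by
      by_contra! hneg
      exact hq.2 (mem_interior_of_neg hneg)
    obtain ⟨t, ht, hw⟩ := exists_walk_nonneg i
    exact ⟨t, ht, visible_of_nonneg i hw hi⟩
  · rw [pent_perimeter]
    exact walk_length.trans (ENNReal.ofReal_le_ofReal (by norm_num))

end
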